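/- Let R > 0 and define A_s(γ) = 2R² arccos(γ/(2R)) − γ·√(R² − γ²/4) for 0 ≤ γ ≤ R. Then ∫₀^R A_s(r) · (2r/R²) dr = (π − 3√3/4)·R². (This is the exact value behind the paper's approximation E[K_{ij}] ≈ 1.84 n in Lemma 2(c): the expected area of the intersection of two discs of radius R whose centers are at distance r, where r has density f(r) = 2r/R² on [0, R].) -/

import Mathlib

/-!
Measuring distances in units of the diameter, `r = 2 R x`, turns the area of the lens into
`2 R² (arccos x - x √(1 - x²))`. Its first moment therefore reduces to the integrals of `x arccos x`
and `x² √(1 - x²)`, which have elementary antiderivatives in terms of `arccos x` and `√(1 - x²)`.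
Taken up to `x = a`, the combined result carries the factor `4 a² - 1` in front of `arccos a`;
it vanishes at `a = 1 / 2`, that is at `r = R`, so the only arccosine left is `arccos 0 = π / 2`.
-/

open Set
open scoped Real

section FundamentalTheorem

variable {E : Type*} [NormedAddCommGroup E] [NormedSpace ℝ E] [CompleteSpace E]

theorem integral_eq_sub_of_hasDerivAt_Ioo_of_mem_Icc {f f' : ℝ → E} {u v a b : ℝ}
    (hf : ContinuousOn f (Icc u v)) (hf' : ContinuousOn f' (Icc u v))
    (hderiv : ∀ x ∈ Ioo u v, HasDerivAt f (f' x) x) (ha : a ∈ Icc u v) (hb : b ∈ Icc u v) :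
    ∫ x in a..b, f' x = f b - f a := by
  have hsub : uIcc a b ⊆ Icc u v := uIcc_subset_Icc ha hb
  have hsub' : Ioo (min a b) (max a b) ⊆ Ioo u v :=
    Ioo_subset_Ioo (le_min ha.1 hb.1) (max_le ha.2 hb.2)
  exact intervalIntegral.integral_eq_sub_of_hasDeriv_right (hf.mono hsub)
    (fun x hx ↦ (hderiv x (hsub' hx)).hasDerivWithinAt) (hf'.mono hsub).intervalIntegrable

end FundamentalTheorem

section UnitCircle

variable {a b x : ℝ}

theorem one_sub_sq_pos_of_mem_Ioo (hx : x ∈ Ioo (-1) 1) : 0 < 1 - x ^ 2 :=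
  sub_pos.2 ((sq_lt_one_iff_abs_lt_one x).2 (abs_lt.2 hx))

theorem hasDerivAt_sqrt_one_sub_sq (hx : x ∈ Ioo (-1) 1) :
    HasDerivAt (fun x ↦ √(1 - x ^ 2)) (-x / √(1 - x ^ 2)) x := by
  refine (((hasDerivAt_pow 2 x).const_sub 1).sqrt (one_sub_sq_pos_of_mem_Ioo hx).ne').congr_deriv ?_
  field_simp
  norm_num

theorem hasDerivAt_antideriv_id_mul_arccos (hx : x ∈ Ioo (-1) 1) :
    HasDerivAt (fun x ↦ ((2 * x ^ 2 - 1) * Real.arccos x - x * √(1 - x ^ 2)) / 4)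
      (x * Real.arccos x) x := by
  have hpos := one_sub_sq_pos_of_mem_Ioo hx
  have hsqrt : √(1 - x ^ 2) ≠ 0 := (Real.sqrt_pos.2 hpos).ne'
  have hsq : √(1 - x ^ 2) ^ 2 = 1 - x ^ 2 := Real.sq_sqrt hpos.le
  refine ((((((hasDerivAt_pow 2 x).const_mul 2).sub_const 1).mul
    (Real.hasDerivAt_arccos hx.1.ne' hx.2.ne)).sub
    ((hasDerivAt_id' x).mul (hasDerivAt_sqrt_one_sub_sq hx))).div_const 4).congr_deriv ?_
  field_simp
  linear_combination -hsq

theorem hasDerivAt_antideriv_sq_mul_sqrt_one_sub_sq (hx : x ∈ Ioo (-1) 1) :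
    HasDerivAt (fun x ↦ (x * (2 * x ^ 2 - 1) * √(1 - x ^ 2) - Real.arccos x) / 8)
      (x ^ 2 * √(1 - x ^ 2)) x := by
  have hpos := one_sub_sq_pos_of_mem_Ioo hx
  have hsqrt : √(1 - x ^ 2) ≠ 0 := (Real.sqrt_pos.2 hpos).ne'
  have hsq : √(1 - x ^ 2) ^ 2 = 1 - x ^ 2 := Real.sq_sqrt hpos.le
  refine (((((hasDerivAt_id' x).mul (((hasDerivAt_pow 2 x).const_mul 2).sub_const 1)).mul
    (hasDerivAt_sqrt_one_sub_sq hx)).sub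
    (Real.hasDerivAt_arccos hx.1.ne' hx.2.ne)).div_const 8).congr_deriv ?_
  simp only [Pi.mul_apply]
  field_simp
  linear_combination (-2 * x ^ 2 - 1) * hsq

theorem integral_id_mul_arccos (ha : a ∈ Icc (-1) 1) (hb : b ∈ Icc (-1) 1) :
    ∫ x in a..b, x * Real.arccos x =
      ((2 * b ^ 2 - 1) * Real.arccos b - b * √(1 - b ^ 2)) / 4 -
        ((2 * a ^ 2 - 1) * Real.arccos a - a * √(1 - a ^ 2)) / 4 :=
  integral_eq_sub_of_hasDerivAt_Ioo_of_mem_Icc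
    (f := fun x ↦ ((2 * x ^ 2 - 1) * Real.arccos x - x * √(1 - x ^ 2)) / 4)
    (by fun_prop) (by fun_prop) (fun _ ↦ hasDerivAt_antideriv_id_mul_arccos) ha hb

theorem integral_sq_mul_sqrt_one_sub_sq (ha : a ∈ Icc (-1) 1) (hb : b ∈ Icc (-1) 1) :
    ∫ x in a..b, x ^ 2 * √(1 - x ^ 2) =
      (b * (2 * b ^ 2 - 1) * √(1 - b ^ 2) - Real.arccos b) / 8 -
        (a * (2 * a ^ 2 - 1) * √(1 - a ^ 2) - Real.arccos a) / 8 :=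
  integral_eq_sub_of_hasDerivAt_Ioo_of_mem_Icc
    (f := fun x ↦ (x * (2 * x ^ 2 - 1) * √(1 - x ^ 2) - Real.arccos x) / 8)
    (by fun_prop) (by fun_prop) (fun _ ↦ hasDerivAt_antideriv_sq_mul_sqrt_one_sub_sq) ha hb

end UnitCircle

/-- The area `A_s(γ)` of the intersection of two discs of radius `R` whose centers are at distance
`γ`. The formula has this meaning for `0 < R` and `0 ≤ γ ≤ 2 * R`. -/
noncomputable def lensArea (R γ : ℝ) : ℝ :=
  2 * R ^ 2 * Real.arccos (γ / (2 * R)) - γ * √(R ^ 2 - γ ^ 2 / 4)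

section LensArea

variable {R a : ℝ}

theorem lensArea_two_mul_mul (hR : 0 < R) (x : ℝ) :
    lensArea R (2 * R * x) = 2 * R ^ 2 * (Real.arccos x - x * √(1 - x ^ 2)) := by
  have hsqrt : √(R ^ 2 - (2 * R * x) ^ 2 / 4) = R * √(1 - x ^ 2) := by
    rw [show R ^ 2 - (2 * R * x) ^ 2 / 4 = R ^ 2 * (1 - x ^ 2) by ring,
      Real.sqrt_mul (sq_nonneg R), Real.sqrt_sq hR.le]
  rw [lensArea, hsqrt, mul_div_cancel_left₀ x (by positivity)]
  ring

theorem integral_lensArea_mul_id (hR : 0 < R) (ha : a ∈ Icc (-1) 1) :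
    ∫ r in (0 : ℝ)..2 * R * a, lensArea R r * r =
      R ^ 4 * ((4 * a ^ 2 - 1) * Real.arccos a - a * (1 + 2 * a ^ 2) * √(1 - a ^ 2) + π / 2) := by
  have h0 : (0 : ℝ) ∈ Icc (-1) 1 := by norm_num
  calc ∫ r in (0 : ℝ)..2 * R * a, lensArea R r * r
      = 2 * R * ∫ x in (0 : ℝ)..a, lensArea R (2 * R * x) * (2 * R * x) := by
        rw [intervalIntegral.mul_integral_comp_mul_left (f := fun r ↦ lensArea R r * r), mul_zero]
    _ = 2 * R * ∫ x in (0 : ℝ)..a,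
          4 * R ^ 3 * (x * Real.arccos x - x ^ 2 * √(1 - x ^ 2)) := by
        congr! 3 with x
        rw [lensArea_two_mul_mul hR]
        ring
    _ = 8 * R ^ 4 *
          ((∫ x in (0 : ℝ)..a, x * Real.arccos x) - ∫ x in (0 : ℝ)..a, x ^ 2 * √(1 - x ^ 2)) := by
        rw [intervalIntegral.integral_const_mul, intervalIntegral.integral_sub
          (Continuous.intervalIntegrable (by fun_prop) _ _)
          (Continuous.intervalIntegrable (by fun_prop) _ _)]
        ring
    _ = _ := by
        rw [integral_id_mul_arccos h0 ha, integral_sq_mul_sqrt_one_sub_sq h0 ha, Real.arccos_zero]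
        ring

end LensArea

/-- Lemma 2(c) of the paper (exact form): with
`A_s(γ) = 2R² arccos (γ/(2R)) − γ √(R² − γ²/4)`,
`∫₀^R A_s(r) (2r/R²) dr = (π − 3√3/4) R²`. -/
theorem stmt_4 (R : ℝ) (hR : 0 < R) :
    ∫ r in (0:ℝ)..R,
        (2 * R ^ 2 * Real.arccos (r / (2 * R)) - r * Real.sqrt (R ^ 2 - r ^ 2 / 4)) *
        (2 * r / R ^ 2) =
      (Real.pi - 3 * Real.sqrt 3 / 4) * R ^ 2 := by
  have hsqrt : √(1 - (1 / 2 : ℝ) ^ 2) = √3 / 2 := by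
    rw [show 1 - (1 / 2 : ℝ) ^ 2 = 3 / 2 ^ 2 by norm_num, Real.sqrt_div' 3 (sq_nonneg 2),
      Real.sqrt_sq zero_le_two]
  calc _ = ∫ r in (0 : ℝ)..R, 2 / R ^ 2 * (lensArea R r * r) := by
        congr! 2 with r
        rw [lensArea]
        ring
    _ = 2 / R ^ 2 * ∫ r in (0 : ℝ)..2 * R * (1 / 2), lensArea R r * r := by
        rw [intervalIntegral.integral_const_mul, show 2 * R * (1 / 2) = R by ring]
    _ = _ := by
        rw [integral_lensArea_mul_id hR (by norm_num), hsqrt]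
        field_simp
        ring
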